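/- For a connected graph G, the maximum number τ(G) of pairwise edge-disjoint spanning trees satisfies τ(G) ≥ ⌊λ(G)/2⌋, where λ(G) denotes the edge connectivity of G. -/

import Mathlib

open SimpleGraph

/-- Edge connectivity: the minimal number of edges whose deletion disconnects `G`. -/
noncomputable def edgeConnectivity {V : Type*} [Fintype V] (G : SimpleGraph V) : ℕ :=
  sInf {n | ∃ S : Finset (Sym2 V), S.card = n ∧ ↑S ⊆ G.edgeSet ∧
    ¬(G.deleteEdges ↑S).Connected}

/-- Tree packing number: the largest `M` such that `G` contains `M` pairwise
edge-disjoint spanning trees. -/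
noncomputable def treePackingNumber {V : Type*} [Fintype V] (G : SimpleGraph V) : ℕ :=
  sSup {M | ∃ T : Fin M → SimpleGraph V, (∀ i, T i ≤ G) ∧ (∀ i, (T i).IsTree) ∧
    Pairwise fun i j => Disjoint (T i).edgeSet (T j).edgeSet}

namespace SimpleGraph

open Finset

variable {V ι : Type*} {G : SimpleGraph V}

/-- A family of pairwise edge-disjoint forests of `G`. -/
structure IsForestPacking (G : SimpleGraph V) (F : ι → SimpleGraph V) : Prop where
  le : ∀ i, F i ≤ G
  isAcyclic : ∀ i, (F i).IsAcyclic
  disjoint : Pairwise fun i j => Disjoint (F i) (F j)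

/-- A forest packing with the largest possible total number of edges. -/
structure IsMaxForestPacking [Fintype ι] (G : SimpleGraph V) (F : ι → SimpleGraph V) : Prop
    extends IsForestPacking G F where
  sum_le : ∀ F' : ι → SimpleGraph V, IsForestPacking G F' →
    ∑ i, (F' i).edgeSet.ncard ≤ ∑ i, (F i).edgeSet.ncard

/-- `F'` is a maximum forest packing whose edges all lie in `F`, up to adding a single edge of `G`
not covered by `F`. -/
def ForestExchange [Fintype ι] (G : SimpleGraph V) (F F' : ι → SimpleGraph V) : Prop :=
  IsMaxForestPacking G F' ∧
    ∃ u v, G.Adj u v ∧ (∀ j, ¬(F j).Adj u v) ∧ ∀ j, F' j ≤ F j ⊔ edge u v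

/-- The edges of `G` left uncovered by some packing reachable from `F` through exchanges. -/
def exchangeGraph [Fintype ι] (G : SimpleGraph V) (F : ι → SimpleGraph V) : SimpleGraph V where
  Adj a b := G.Adj a b ∧
    ∃ F', Relation.ReflTransGen (ForestExchange G) F F' ∧ ∀ j, ¬(F' j).Adj a b
  symm := ⟨fun _ _ ⟨h, F', hF', hj⟩ => ⟨h.symm, F', hF', fun j hab => hj j hab.symm⟩⟩
  loopless := ⟨fun _ h => h.1.ne rfl⟩

lemma exists_isMaxForestPacking [Fintype V] [Fintype ι] (G : SimpleGraph V) :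
    ∃ F : ι → SimpleGraph V, IsMaxForestPacking G F := by
  obtain ⟨F, hF, hmax⟩ := Set.exists_max_image {F : ι → SimpleGraph V | IsForestPacking G F}
    (fun F => ∑ i, (F i).edgeSet.ncard) (Set.toFinite _)
    ⟨fun _ => ⊥, fun _ => bot_le, fun _ => isAcyclic_bot, fun _ _ _ => disjoint_bot_left⟩
  exact ⟨F, hF, hmax⟩

lemma IsForestPacking.update [DecidableEq ι] {F : ι → SimpleGraph V} (hF : IsForestPacking G F)
    (i : ι) {T : SimpleGraph V} (hle : T ≤ G) (hT : T.IsAcyclic)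
    (hdisj : ∀ j, j ≠ i → Disjoint T (F j)) : IsForestPacking G (Function.update F i T) where
  le j := by
    by_cases h : j = i
    · subst h; simpa using hle
    · simpa [h] using hF.le j
  isAcyclic j := by
    by_cases h : j = i
    · subst h; simpa using hT
    · simpa [h] using hF.isAcyclic j
  disjoint j l hjl := by
    by_cases h : j = i
    · subst h; simpa [hjl.symm] using hdisj l hjl.symm
    · by_cases h' : l = i
      · subst h'; simpa [h] using (hdisj j h).symm
      · simpa [h, h'] using hF.disjoint hjl

lemma ncard_edgeSet_sup_edge [Finite V] {T : SimpleGraph V} {u v : V} (huv : u ≠ v)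
    (h : ¬T.Adj u v) : (T ⊔ edge u v).edgeSet.ncard = T.edgeSet.ncard + 1 := by
  rw [edgeSet_sup, edgeSet_edge_of_ne huv, Set.union_singleton,
    Set.ncard_insert_of_notMem (by simpa using h)]

lemma reachable_le_of_adj_le {H K : SimpleGraph V} (h : ∀ a b, H.Adj a b → K.Reachable a b)
    {a b : V} (hab : H.Reachable a b) : K.Reachable a b := by
  obtain ⟨p⟩ := hab
  induction p with
  | nil => rfl
  | cons hadj _ ih => exact (h _ _ hadj).trans ih

section Exchange

variable [Fintype ι] {F F' : ι → SimpleGraph V} {u v : V}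

lemma IsMaxForestPacking.of_reflTransGen (hF : IsMaxForestPacking G F)
    (h : Relation.ReflTransGen (ForestExchange G) F F') : IsMaxForestPacking G F' := by
  cases h with
  | refl => exact hF
  | tail _ h => exact h.1

variable [Finite V]

lemma IsMaxForestPacking.reachable_of_not_adj (hF : IsMaxForestPacking G F) (huv : G.Adj u v)
    (hu : ∀ j, ¬(F j).Adj u v) (i : ι) : (F i).Reachable u v := by
  classical
  by_contra hr
  have hpack : IsForestPacking G (Function.update F i (F i ⊔ edge u v)) :=
    hF.update i (sup_le (hF.le i) ((edge_le_iff _).2 (Or.inr huv)))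
      ((hF.isAcyclic i).sup_edge_of_not_reachable hr)
      fun j hj => disjoint_sup_left.2 ⟨hF.disjoint hj.symm, ((disjoint_edge _).2 (hu j)).symm⟩
  refine (hF.sum_le _ hpack).not_gt (Finset.sum_lt_sum (fun j _ => ?_) ⟨i, mem_univ i, ?_⟩)
  · by_cases h : j = i
    · subst h
      rw [Function.update_self, ncard_edgeSet_sup_edge huv.ne (hu j)]
      exact Nat.le_succ _
    · rw [Function.update_of_ne h]
  · rw [Function.update_self, ncard_edgeSet_sup_edge huv.ne (hu i)]
    exact Nat.lt_succ_self _

lemma IsMaxForestPacking.exists_exchange (hF : IsMaxForestPacking G F) (huv : G.Adj u v)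
    (hu : ∀ j, ¬(F j).Adj u v) (i : ι) {p : (F i).Walk u v} (hp : p.IsPath) {e : Sym2 V}
    (he : e ∈ p.edges) : ∃ F', ForestExchange G F F' ∧ ∀ j, e ∉ (F' j).edgeSet := by
  classical
  have hei : e ∈ (F i).edgeSet := p.edges_subset_edgeSet he
  have hne : e ≠ s(u, v) := by
    rintro rfl
    exact hu i hei
  have hle : (F i).deleteEdges {e} ≤ F i := deleteEdges_le _
  have hr : ¬((F i).deleteEdges {e}).Reachable u v := by
    intro hr
    obtain ⟨q, hq⟩ := hr.exists_isPath
    have heq : p = q.mapLe hle := congrArg Subtype.val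
      ((hF.isAcyclic i).subsingleton_path u v |>.elim ⟨p, hp⟩ ⟨q.mapLe hle, hq.mapLe hle⟩)
    rw [heq, Walk.edges_mapLe_eq_edges] at he
    simpa using q.edges_subset_edgeSet he
  have hnadj : ¬((F i).deleteEdges {e}).Adj u v := fun h => hr h.reachable
  have hpack : IsForestPacking G (Function.update F i ((F i).deleteEdges {e} ⊔ edge u v)) :=
    hF.update i (sup_le (hle.trans (hF.le i)) ((edge_le_iff _).2 (Or.inr huv)))
      (((hF.isAcyclic i).anti hle).sup_edge_of_not_reachable hr)
      fun j hj => disjoint_sup_left.2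
        ⟨(hF.disjoint hj.symm).mono_left hle, ((disjoint_edge _).2 (hu j)).symm⟩
  have hcard : ∀ j, (Function.update F i ((F i).deleteEdges {e} ⊔ edge u v) j).edgeSet.ncard =
      (F j).edgeSet.ncard := by
    intro j
    by_cases h : j = i
    · subst h
      rw [Function.update_self, ncard_edgeSet_sup_edge huv.ne hnadj, edgeSet_deleteEdges,
        Set.ncard_sdiff_singleton_add_one hei]
    · simp [h]
  refine ⟨_, ⟨⟨hpack, fun F' hF' => ?_⟩, u, v, huv, hu, fun j => ?_⟩, fun j => ?_⟩
  · simpa only [hcard] using hF.sum_le F' hF'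
  · by_cases h : j = i
    · subst h
      simpa using hle.trans le_sup_left
    · simp [h]
  · by_cases h : j = i
    · subst h
      rw [Function.update_self, edgeSet_sup, edgeSet_edge_of_ne huv.ne]
      simp [hne]
    · rw [Function.update_of_ne h]
      exact fun hej => Set.disjoint_left.1 (disjoint_edgeSet.2 (hF.disjoint h)) hej hei

lemma IsMaxForestPacking.reachable_inf_exchangeGraph (hF : IsMaxForestPacking G F)
    (h : Relation.ReflTransGen (ForestExchange G) F F') (huv : G.Adj u v)
    (hu : ∀ j, ¬(F' j).Adj u v) (i : ι) : (F' i ⊓ exchangeGraph G F).Reachable u v := by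
  have hF' := hF.of_reflTransGen h
  obtain ⟨p, hp⟩ := (hF'.reachable_of_not_adj huv hu i).exists_isPath
  refine ⟨p.transfer _ fun e he => ?_⟩
  obtain ⟨F'', hex, hcov⟩ := hF'.exists_exchange huv hu i hp he
  have hei := p.edges_subset_edgeSet he
  induction e with
  | _ a b => exact ⟨hei, hF'.le i hei, F'', h.tail hex, hcov⟩

lemma IsMaxForestPacking.reachable_inf_of_reflTransGen (hF : IsMaxForestPacking G F)
    (h : Relation.ReflTransGen (ForestExchange G) F F') (i : ι)
    (hr : (F' i ⊓ exchangeGraph G F).Reachable u v) :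
    (F i ⊓ exchangeGraph G F).Reachable u v := by
  induction h with
  | refl => exact hr
  | @tail F₁ F₂ h₁ h₂ ih =>
    refine ih (reachable_le_of_adj_le (fun a b hab => ?_) hr)
    obtain ⟨-, x, y, hxy, hcov, hle⟩ := h₂
    have hxyr := hF.reachable_inf_exchangeGraph h₁ hxy hcov i
    rcases hle i hab.1 with h | h
    · exact Adj.reachable ⟨h, hab.2⟩
    · rcases ((edge_adj _ _ _ _).1 h).1 with ⟨rfl, rfl⟩ | ⟨rfl, rfl⟩
      · exact hxyr
      · exact hxyr.symm

/-- Each forest of a maximum packing spans every component of the exchange graph. -/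
lemma IsMaxForestPacking.reachable_inf_exchangeGraph_of_reachable (hF : IsMaxForestPacking G F)
    (i : ι) (h : (exchangeGraph G F).Reachable u v) :
    (F i ⊓ exchangeGraph G F).Reachable u v := by
  refine reachable_le_of_adj_le (fun a b hab => ?_) h
  obtain ⟨hG, F', hF', hcov⟩ := hab
  exact hF.reachable_inf_of_reflTransGen hF' i (hF.reachable_inf_exchangeGraph hF' hG hcov i)

end Exchange

/-- A graph on `n` vertices has at least `n - c` edges, where `c` is its number of components. -/
lemma card_le_ncard_edgeSet_add_card_connectedComponent [Finite V] (H : SimpleGraph V) :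
    Nat.card V ≤ H.edgeSet.ncard + Nat.card H.ConnectedComponent := by
  classical
  have := Fintype.ofFinite V
  cases isEmpty_or_nonempty V with
  | inl h => simp
  | inr h =>
    obtain ⟨r⟩ := h
    let c₀ := H.connectedComponentMk r
    let star : Set (Sym2 V) :=
      (fun c : H.ConnectedComponent => s(r, c.out)) '' {c | c ≠ c₀}
    let K := H ⊔ fromEdgeSet star
    have hout : ∀ v, H.Reachable (H.connectedComponentMk v).out v := fun v =>
      ConnectedComponent.exact (Quot.out_eq _)
    have hr : ∀ v, K.Reachable r v := by
      intro v
      by_cases hv : H.connectedComponentMk v = c₀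
      · exact ((ConnectedComponent.exact hv).mono le_sup_left).symm
      · have hne : r ≠ (H.connectedComponentMk v).out := by
          intro h
          exact hv (by rw [← ConnectedComponent.eq.2 (hout v), ← h])
        refine (Adj.reachable (Or.inr ?_)).trans ((hout v).mono le_sup_left)
        exact (fromEdgeSet_adj _).2 ⟨⟨_, hv, rfl⟩, hne⟩
    have hK : K.Connected :=
      { preconnected := fun a b => (hr a).symm.trans (hr b), nonempty := ⟨r⟩ }
    have h1 := hK.card_vert_le_card_edgeSet_add_one
    rw [Nat.card_coe_set_eq] at h1
    have h2 : K.edgeSet.ncard ≤ H.edgeSet.ncard + star.ncard := by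
      refine (Set.ncard_le_ncard ?_).trans (Set.ncard_union_le _ _)
      rw [edgeSet_sup, edgeSet_fromEdgeSet]
      exact Set.union_subset_union_right _ Set.sdiff_subset
    have h3 : star.ncard ≤ {c | c ≠ c₀}.ncard := Set.ncard_image_le
    have h4 : {c | c ≠ c₀}.ncard + 1 = Nat.card H.ConnectedComponent := by
      rw [← Set.ncard_univ, ← Set.ncard_sdiff_singleton_add_one (Set.mem_univ c₀)]
      congr 2
      ext; simp
    omega

lemma IsAcyclic.ncard_edgeSet_lt [Finite V] [Nonempty V] {T : SimpleGraph V} (hT : T.IsAcyclic) :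
    T.edgeSet.ncard < Nat.card V := by
  obtain ⟨S, hTS, -, hS⟩ := connected_top.exists_isTree_le_of_le_of_isAcyclic le_top hT
  have h := (isTree_iff_connected_and_card.1 hS).2
  rw [Nat.card_coe_set_eq] at h
  have := Set.ncard_le_ncard (edgeSet_mono hTS)
  omega

/-- A forest whose restriction to `H` spans all components of `H` has fewer edges outside `H` than
`H` has components. -/
lemma IsAcyclic.ncard_edgeSet_diff_lt [Finite V] [Nonempty V] {T H : SimpleGraph V}
    (hT : T.IsAcyclic) (h : ∀ u v, H.Reachable u v → (T ⊓ H).Reachable u v) :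
    (T.edgeSet \ H.edgeSet).ncard < Nat.card H.ConnectedComponent := by
  have h1 := hT.ncard_edgeSet_lt
  have h2 := card_le_ncard_edgeSet_add_card_connectedComponent (T ⊓ H)
  have h3 : Nat.card (T ⊓ H).ConnectedComponent ≤ Nat.card H.ConnectedComponent := by
    refine Nat.card_le_card_of_injective (ConnectedComponent.map (Hom.ofLE inf_le_right)) ?_
    intro c d
    refine ConnectedComponent.ind₂ (fun u v huv => ?_) c d
    exact ConnectedComponent.sound (h u v (ConnectedComponent.exact huv))
  have h4 := Set.ncard_inter_add_ncard_sdiff_eq_ncard T.edgeSet H.edgeSet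
  rw [edgeSet_inf] at h2
  omega

/-- The edges of `G` with exactly one end in the component `c` of `H`. -/
def componentCut (G : SimpleGraph V) {H : SimpleGraph V} (c : H.ConnectedComponent) :
    Set (Sym2 V) :=
  {e | e ∈ G.edgeSet ∧
    ∃ a b, e = s(a, b) ∧ H.connectedComponentMk a = c ∧ H.connectedComponentMk b ≠ c}

lemma componentCut_subset (G : SimpleGraph V) {H : SimpleGraph V} (c : H.ConnectedComponent) :
    componentCut G c ⊆ G.edgeSet \ H.edgeSet := by
  rintro _ ⟨he, a, b, rfl, ha, hb⟩
  exact ⟨he, fun hab => hb (ha ▸ (ConnectedComponent.sound (Adj.reachable hab)).symm)⟩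

lemma not_connected_deleteEdges_componentCut {H : SimpleGraph V} (hH : ¬H.Preconnected)
    (c : H.ConnectedComponent) : ¬(G.deleteEdges (componentCut G c)).Connected := by
  intro hconn
  obtain ⟨a, rfl⟩ := c.exists_rep
  refine hH fun x y => ?_
  have key : ∀ z, H.connectedComponentMk z = H.connectedComponentMk a := by
    intro z
    obtain ⟨p⟩ := hconn.preconnected a z
    by_contra hz
    obtain ⟨d, -, hd, hd'⟩ := p.exists_boundary_dart
      {w | H.connectedComponentMk w = H.connectedComponentMk a} rfl hz
    have hadj := d.adj
    rw [deleteEdges_adj] at hadj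
    exact hadj.2 ⟨hadj.1, d.fst, d.snd, rfl, hd, hd'⟩
  exact ConnectedComponent.exact ((key x).trans (key y).symm)

lemma sum_ncard_componentCut_le [Finite V] (G H : SimpleGraph V) [Fintype H.ConnectedComponent] :
    ∑ c : H.ConnectedComponent, (componentCut G c).ncard ≤ 2 * (G.edgeSet \ H.edgeSet).ncard := by
  classical
  have := Fintype.ofFinite V
  let B : Finset (Sym2 V) := (G.edgeSet \ H.edgeSet).toFinset
  have hcut : ∀ c : H.ConnectedComponent,
      (componentCut G c).ncard = #(B.bipartiteAbove (fun c e => e ∈ componentCut G c) c) := by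
    intro c
    rw [← Set.ncard_coe_finset]
    congr 1
    ext e
    simp only [bipartiteAbove, coe_filter, Set.mem_ofPred_eq, B, Set.mem_toFinset]
    exact ⟨fun h => ⟨componentCut_subset G c h, h⟩, fun h => h.2⟩
  rw [Finset.sum_congr rfl fun c _ => hcut c, sum_card_bipartiteAbove_eq_sum_card_bipartiteBelow,
    Set.ncard_eq_toFinset_card', mul_comm, ← smul_eq_mul]
  refine sum_le_card_nsmul _ _ _ fun e _ => ?_
  induction e with
  | _ a b =>
    refine (card_le_card (t := {H.connectedComponentMk a, H.connectedComponentMk b}) ?_).trans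
      card_le_two
    intro c hc
    obtain ⟨-, -, x, y, hxy, hx, -⟩ := mem_filter.1 hc
    rcases Sym2.eq_iff.1 hxy with ⟨rfl, rfl⟩ | ⟨rfl, rfl⟩ <;> simp [hx]

/-- If deleting fewer than `2 * k` edges never disconnects `G`, then `G` has `k` pairwise
edge-disjoint spanning trees. -/
theorem exists_edgeDisjoint_spanningTrees [Fintype V] [Nonempty V] (k : ℕ)
    (hcut : ∀ S ⊆ G.edgeSet, ¬(G.deleteEdges S).Connected → 2 * k ≤ S.ncard) :
    ∃ T : Fin k → SimpleGraph V, (∀ i, T i ≤ G) ∧ (∀ i, (T i).IsTree) ∧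
      Pairwise fun i j => Disjoint (T i).edgeSet (T j).edgeSet := by
  classical
  obtain ⟨F, hF⟩ := exists_isMaxForestPacking (ι := Fin k) G
  let H := exchangeGraph G F
  have hspan : ∀ i u v, H.Reachable u v → (F i ⊓ H).Reachable u v := fun i _ _ h =>
    hF.reachable_inf_exchangeGraph_of_reachable i h
  refine ⟨F, hF.le, fun i => ⟨?_, hF.isAcyclic i⟩, fun i j h => disjoint_edgeSet.2 (hF.disjoint h)⟩
  suffices hH : H.Preconnected from ⟨fun u v => (hspan i u v (hH u v)).mono inf_le_left⟩
  by_contra hH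
  have := Fintype.ofFinite H.ConnectedComponent
  have hcovered : G.edgeSet \ H.edgeSet ⊆ ⋃ j, (F j).edgeSet \ H.edgeSet := by
    rintro ⟨a, b⟩ ⟨hG, hn⟩
    by_contra hcov
    simp only [Set.mem_iUnion, Set.mem_sdiff, not_exists, not_and_not_right] at hcov
    exact hn ⟨hG, F, .refl, fun j hj => hn (hcov j hj)⟩
  have hupper : (G.edgeSet \ H.edgeSet).ncard ≤ ∑ j, ((F j).edgeSet \ H.edgeSet).ncard :=
    (Set.ncard_le_ncard hcovered).trans (Set.ncard_iUnion_le_of_fintype _)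
  have hforest : ∑ j, ((F j).edgeSet \ H.edgeSet).ncard < ∑ _j : Fin k,
      Nat.card H.ConnectedComponent :=
    Finset.sum_lt_sum_of_nonempty ⟨i, mem_univ i⟩ fun j _ =>
      (hF.isAcyclic j).ncard_edgeSet_diff_lt (hspan j)
  have hlower : Fintype.card H.ConnectedComponent * (2 * k) ≤
      ∑ c : H.ConnectedComponent, (componentCut G c).ncard := by
    rw [← smul_eq_mul, ← Finset.card_univ]
    exact card_nsmul_le_sum _ _ _ fun c _ => hcut _ ((componentCut_subset G c).trans Set.sdiff_subset)
      (not_connected_deleteEdges_componentCut hH c)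
  have hdouble := sum_ncard_componentCut_le G H
  rw [Finset.sum_const, Finset.card_univ, Fintype.card_fin, smul_eq_mul,
    Nat.card_eq_fintype_card] at hforest
  linarith

lemma bddAbove_treePacking [Fintype V] [Nontrivial V] (G : SimpleGraph V) :
    BddAbove {M | ∃ T : Fin M → SimpleGraph V, (∀ i, T i ≤ G) ∧ (∀ i, (T i).IsTree) ∧
      Pairwise fun i j => Disjoint (T i).edgeSet (T j).edgeSet} := by
  refine ⟨Nat.card (Sym2 V), ?_⟩
  rintro M ⟨T, -, hT, hdisj⟩
  have hne : ∀ i, (T i).edgeSet.Nonempty := by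
    intro i
    obtain ⟨v⟩ := (hT i).connected.nonempty
    obtain ⟨w, hw⟩ := (hT i).connected.preconnected.exists_adj_of_nontrivial v
    exact ⟨s(v, w), hw⟩
  choose e he using hne
  have hinj : Function.Injective e := by
    intro i j hij
    by_contra h
    exact Set.disjoint_left.1 (hdisj h) (he i) (hij ▸ he j)
  simpa using Nat.card_le_card_of_injective e hinj

end SimpleGraph

theorem edge_connectivity_half_le_tree_packing
    {V : Type*} [Fintype V] (G : SimpleGraph V) (hG : G.Connected) :
    edgeConnectivity G / 2 ≤ treePackingNumber G := by
  have := hG.nonempty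
  rcases Nat.eq_zero_or_pos (edgeConnectivity G / 2) with h0 | hpos
  · simp [h0]
  obtain ⟨S, -, -, hS⟩ := Nat.sInf_mem (Nat.nonempty_of_pos_sInf
    (show 0 < edgeConnectivity G by omega))
  have : Nontrivial V := by
    by_contra h
    rw [not_nontrivial_iff_subsingleton] at h
    exact hS ⟨.of_subsingleton⟩
  refine le_csSup (bddAbove_treePacking G) (exists_edgeDisjoint_spanningTrees _ ?_)
  intro S hSG hS
  have hle : edgeConnectivity G ≤ S.ncard :=
    Nat.sInf_le ⟨(Set.toFinite S).toFinset, (Set.ncard_eq_toFinset_card S).symm, by simpa, by simpa⟩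
  omega
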